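/- For integers n ≥ 1 and k ≥ 2, the independence complex Ind(L^k_n) is l_{n,k}-connected, where l_{n,k} = ⌊(n−1)/(2k−1) − 1⌋. -/

import Mathlib

open SimpleGraph

/-- A claw in `G` on center `u` and leaves `v₁, v₂, v₃`. -/
def SimpleGraph.IsClaw {V : Type*} (G : SimpleGraph V) (u v₁ v₂ v₃ : V) : Prop :=
  v₁ ≠ v₂ ∧ v₁ ≠ v₃ ∧ v₂ ≠ v₃ ∧
  G.Adj u v₁ ∧ G.Adj u v₂ ∧ G.Adj u v₃ ∧
  ¬G.Adj v₁ v₂ ∧ ¬G.Adj v₁ v₃ ∧ ¬G.Adj v₂ v₃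

/-- A graph is claw-free if it has no induced claw. -/
def SimpleGraph.ClawFree {V : Type*} (G : SimpleGraph V) : Prop :=
  ∀ u v₁ v₂ v₃ : V, ¬ G.IsClaw u v₁ v₂ v₃

/-- The closed neighborhood `Ṅ(v) = N(v) ∪ {v}`. -/
def SimpleGraph.closedNbhd {V : Type*} (G : SimpleGraph V) (v : V) : Set V :=
  insert v (G.neighborSet v)

/-- The set of faces of the independence complex `Ind(G)`. -/
def indepFaces {V : Type*} (G : SimpleGraph V) : Set (Finset V) :=
  {s | ∀ a ∈ s, ∀ b ∈ s, ¬ G.Adj a b}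

/-- The geometric realization of an abstract simplicial complex with vertex set `V`. -/
def realization {V : Type*} (K : Set (Finset V)) : Type _ :=
  {f : V → ℝ // (∀ v, 0 ≤ f v) ∧ (∑ᶠ v, f v) = 1 ∧ ∃ s ∈ K, {v | f v ≠ 0} = ↑s}

instance {V : Type*} (K : Set (Finset V)) : TopologicalSpace (realization K) :=
  instTopologicalSpaceSubtype

/-- A space is `n`-connected (`n : ℤ`) if it is nonempty when `n ≥ -1` and every continuous
map from the `i`-sphere extends to the `(i+1)`-ball for all `0 ≤ i ≤ n`. -/
def IsNConnected (n : ℤ) (X : Type*) [TopologicalSpace X] : Prop :=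
  (-1 ≤ n → Nonempty X) ∧
  ∀ i : ℕ, (i : ℤ) ≤ n →
    ∀ f : C(Metric.sphere (0 : EuclideanSpace ℝ (Fin (i + 1))) 1, X),
      ∃ g : C(Metric.closedBall (0 : EuclideanSpace ℝ (Fin (i + 1))) 1, X),
        ∀ x : Metric.sphere (0 : EuclideanSpace ℝ (Fin (i + 1))) 1,
          g ⟨x.1, Metric.sphere_subset_closedBall x.2⟩ = f x

/-- Relation generating the unreduced suspension: glue `X × {0}` to a south pole and
`X × {1}` to a north pole. -/
def SuspRel (X : Type*) : X × unitInterval ⊕ Bool → X × unitInterval ⊕ Bool → Prop :=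
  fun a b => (∃ x, a = Sum.inl (x, 0) ∧ b = Sum.inr false) ∨
    (∃ x, a = Sum.inl (x, 1) ∧ b = Sum.inr true)

/-- The unreduced suspension of a space. -/
def Susp (X : Type*) [TopologicalSpace X] : Type _ := Quot (SuspRel X)

instance (X : Type*) [TopologicalSpace X] : TopologicalSpace (Susp X) :=
  instTopologicalSpaceQuot

/-- The north pole of a suspension. -/
def Susp.north (X : Type*) [TopologicalSpace X] : Susp X := Quot.mk _ (Sum.inr true)

/-- Relation generating the wedge sum of a family of pointed spaces. -/
def WedgeRel {ι : Type*} (X : ι → Type*) (pt : ∀ i, X i) :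
    (Σ i, X i) ⊕ Unit → (Σ i, X i) ⊕ Unit → Prop :=
  fun a b => ∃ i, a = Sum.inl ⟨i, pt i⟩ ∧ b = Sum.inr ()

/-- The wedge sum of a family of pointed spaces. -/
def Wedge {ι : Type*} (X : ι → Type*) [∀ i, TopologicalSpace (X i)] (pt : ∀ i, X i) :
    Type _ :=
  Quot (WedgeRel X pt)

instance {ι : Type*} (X : ι → Type*) [∀ i, TopologicalSpace (X i)] (pt : ∀ i, X i) :
    TopologicalSpace (Wedge X pt) :=
  instTopologicalSpaceQuot

/-- The graph `L^k_n`: vertices `{1, …, n}`, with `i < j` adjacent iff `j - i < k`. -/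
def lineGraphL (n k : ℕ) : SimpleGraph (Fin n) :=
  SimpleGraph.fromRel (fun i j => (i : ℕ) < j ∧ (j : ℕ) - i < k)

/-- The graph `C^k_n`: vertices `{1, …, n}`, with `i < j` adjacent iff `j - i < k` or
`(n + i) - j < k`. -/
def circGraphC (n k : ℕ) : SimpleGraph (Fin n) :=
  SimpleGraph.fromRel (fun i j => (i : ℕ) < j ∧ ((j : ℕ) - i < k ∨ (n + i) - j < k))

/-- One elementary collapse step: remove a free face `σ` together with the unique face
`τ` properly containing it (with `τ` of one dimension higher). -/
def ElemCollapse {V : Type*} (K L : Set (Finset V)) : Prop :=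
  ∃ σ τ : Finset V, σ ∈ K ∧ τ ∈ K ∧ σ ⊂ τ ∧ τ.card = σ.card + 1 ∧
    (∀ ρ ∈ K, σ ⊂ ρ → ρ = τ) ∧ L = K \ {σ, τ}

/-- `K` collapses onto `L` if there is a finite sequence of elementary collapses from
`K` to `L`. -/
def Collapses {V : Type*} (K L : Set (Finset V)) : Prop :=
  Relation.ReflTransGen ElemCollapse K L

/-!
Connectivity is glued along open covers: if `X` is covered by two relatively open `n`-connected
sets with `(n - 1)`-connected intersection, then `X` is `n`-connected. Represent a map into `X` from
a sphere of dimension at most `n` as a map from the boundary of the cube `[-1, 1] ^ d`, `d ≤ n + 1`,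
cut the cube into a grid so fine that the part of the boundary in each small cube is sent into one
of the two sets, choose that set as the target of the small cube, and extend cell by cell. A cell
whose target is the intersection lies in two small cubes, so it has dimension at most `n`.

Covering the realization of a complex by the open star of a vertex `v`, which is contractible, and
the complement of `v`, which retracts to the deletion of `v` and meets the star in a set homotopy
equivalent to the link of `v`, one gets `n`-connectedness from that of the deletion and
`(n - 1)`-connectedness of the link.

Let `a` be the first vertex of the line graph. Deleting the neighbours of `a` one at a time, from
the largest to the smallest, isolates `a`, and what remains is a cone with apex `a`. The link of the
neighbour `v` deleted at some stage is the independence complex of the line graph on the vertices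
from `v + k ≤ a + (2 * k - 1)` onwards. Hence every `2 * k - 1` vertices gain one degree of
connectivity.
-/

section

open Set Metric Module

section ExtensionProperty

/-- Maps into `R` extend from `A` to `B`: every map that is continuous on `A` and sends `A` into `R`
agrees on `A` with one that is continuous on `B` and sends `B` into `R`. Only the values on `A`,
resp. `B`, of these total functions matter. -/
def ExtensionProperty {α T : Type*} [TopologicalSpace α] [TopologicalSpace T]
    (A B : Set α) (R : Set T) : Prop :=
  ∀ f : α → T, ContinuousOn f A → MapsTo f A R →
    ∃ g : α → T, ContinuousOn g B ∧ MapsTo g B R ∧ EqOn g f A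

variable {α β T : Type*} [TopologicalSpace α] [TopologicalSpace β] [TopologicalSpace T]

theorem ExtensionProperty.of_leftInvOn {A B : Set α} {A' B' : Set β} {R : Set T}
    (h : ExtensionProperty A B R) {φ : β → α} {ψ : α → β} (hφ : ContinuousOn φ B')
    (hφB : MapsTo φ B' B) (hφA : MapsTo φ A' A) (hψ : ContinuousOn ψ A) (hψA : MapsTo ψ A A')
    (hψφ : LeftInvOn ψ φ A') : ExtensionProperty A' B' R := by
  intro f hf hfR
  obtain ⟨g, hg, hgR, hgf⟩ := h (f ∘ ψ) (hf.comp hψ hψA) (hfR.comp hψA)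
  refine ⟨g ∘ φ, hg.comp hφ hφB, hgR.comp hφB, fun x hx => ?_⟩
  simp only [Function.comp_apply, hgf (hφA hx), hψφ hx]

theorem ExtensionProperty.of_homeomorph {A B : Set α} {A' B' : Set β} {R : Set T}
    (h : ExtensionProperty A B R) (φ : α ≃ₜ β) (hA : φ '' A = A') (hB : φ '' B = B') :
    ExtensionProperty A' B' R := by
  subst hA hB
  refine h.of_leftInvOn (φ := φ.symm) (ψ := φ) φ.symm.continuous.continuousOn ?_ ?_
    φ.continuous.continuousOn (mapsTo_image φ A) fun x _ => φ.apply_symm_apply x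
  all_goals
    rintro _ ⟨x, hx, rfl⟩
    simpa using hx

theorem exists_continuousOn_extend [Nonempty T] {A : Set α} (f : C(A, T)) :
    ∃ F : α → T, ContinuousOn F A ∧ ∀ x : A, F x = f x := by
  let F : α → T := Function.extend Subtype.val f fun _ => Classical.arbitrary T
  have hF (x : A) : F x = f x := Subtype.val_injective.extend_apply _ _ x
  exact ⟨F, continuousOn_iff_continuous_domRestrict.2 <|
    f.continuous.congr fun x => (hF x).symm, hF⟩

theorem extensionProperty_iff_exists_continuousMap [Nonempty T] {A B : Set α} {R : Set T}
    (hAB : A ⊆ B) : ExtensionProperty A B R ↔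
      ∀ f : C(A, R), ∃ g : C(B, R), ∀ x : A, g (inclusion hAB x) = f x := by
  let val : C(R, T) := ⟨Subtype.val, continuous_subtype_val⟩
  constructor
  · intro h f
    obtain ⟨F, hF, hFf⟩ := exists_continuousOn_extend (val.comp f)
    obtain ⟨g, hg, hgR, hgF⟩ := h F hF fun x hx => hFf ⟨x, hx⟩ ▸ (f ⟨x, hx⟩).2
    exact ⟨⟨hgR.restrict, hg.mapsToRestrict hgR⟩, fun x => Subtype.ext ((hgF x.2).trans (hFf x))⟩
  · intro h f hf hfR
    obtain ⟨g, hg⟩ := h ⟨hfR.restrict, hf.mapsToRestrict hfR⟩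
    obtain ⟨G, hG, hGg⟩ := exists_continuousOn_extend (val.comp g)
    exact ⟨G, hG, fun x hx => hGg ⟨x, hx⟩ ▸ (g ⟨x, hx⟩).2, fun x hx =>
      (hGg ⟨x, hAB hx⟩).trans (congrArg Subtype.val (hg ⟨x, hx⟩))⟩

theorem exists_continuousOn_union {A B : Set α} (hA : IsClosed A) (hB : IsClosed B) {f g : α → T}
    (hf : ContinuousOn f A) (hg : ContinuousOn g B) (hfg : EqOn f g (A ∩ B)) :
    ∃ h : α → T, ContinuousOn h (A ∪ B) ∧ EqOn h f A ∧ EqOn h g B := by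
  classical
  have hhA : EqOn (A.piecewise f g) f A := piecewise_eqOn _ _ _
  have hhB : EqOn (A.piecewise f g) g B := fun x hx => by
    by_cases hxA : x ∈ A
    · rw [hhA hxA, hfg ⟨hxA, hx⟩]
    · exact piecewise_eq_of_notMem _ _ _ hxA
  exact ⟨_, (hf.congr hhA).union_of_isClosed (hg.congr hhB) hA hB, hhA, hhB⟩

/-- Here and below the strata of `α` are the fibres of `p`, indexed by a poset in which smaller
elements are faces: `p ⁻¹' Iic c` is the closed cell `c` and `p ⁻¹' Iio c` its boundary. -/
theorem exists_extension_insert {κ : Type*} [PartialOrder κ] {p : α → κ} {R : κ → Set T}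
    (hR : Monotone R) {B : Set κ} {c : κ} (hc : IsClosed (p ⁻¹' Iic c)) (hB : IsClosed (p ⁻¹' B))
    (hcB : Iio c ⊆ B) (hext : ExtensionProperty (p ⁻¹' Iio c) (p ⁻¹' Iic c) (R c))
    (hcnot : c ∉ B) {f : α → T} (hf : ContinuousOn f (p ⁻¹' B))
    (hfR : ∀ x ∈ p ⁻¹' B, f x ∈ R (p x)) :
    ∃ g : α → T, ContinuousOn g (p ⁻¹' insert c B) ∧ (∀ x ∈ p ⁻¹' insert c B, g x ∈ R (p x)) ∧
      EqOn g f (p ⁻¹' B) := by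
  obtain ⟨f', hf', hfR', hff'⟩ := hext f (hf.mono (preimage_mono hcB))
    fun x hx => hR (le_of_lt hx) (hfR x (hcB hx))
  obtain ⟨g, hg, hgf', hgf⟩ := exists_continuousOn_union hc hB hf' hf fun x hx =>
    hff' <| lt_of_le_of_ne hx.1 fun hxc => hcnot (hxc ▸ hx.2)
  have hunion : p ⁻¹' insert c B ⊆ p ⁻¹' Iic c ∪ p ⁻¹' B := fun x hx =>
    hx.imp_left le_of_eq
  refine ⟨g, hg.mono hunion, fun x hx => ?_, hgf⟩
  rcases hx with hxc | hxB
  · rw [hgf' hxc.le, hxc]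
    exact hfR' hxc.le
  · exact hgf hxB ▸ hfR x hxB

theorem exists_extension_of_isLowerSet {κ : Type*} [PartialOrder κ] {p : α → κ}
    (hp : ∀ c, IsClosed (p ⁻¹' Iic c)) {R : κ → Set T} (hR : Monotone R) {A : Set κ}
    (hA : IsLowerSet A) {f : α → T} (hf : ContinuousOn f (p ⁻¹' A))
    (hfR : ∀ x ∈ p ⁻¹' A, f x ∈ R (p x)) (B : Finset κ) (hB : IsLowerSet (B : Set κ)) (hAB : A ⊆ B)
    (hext : ∀ c ∈ B, ExtensionProperty (p ⁻¹' Iio c) (p ⁻¹' Iic c) (R c)) :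
    ∃ g : α → T, ContinuousOn g (p ⁻¹' B) ∧ (∀ x ∈ p ⁻¹' B, g x ∈ R (p x)) ∧
      EqOn g f (p ⁻¹' A) := by
  classical
  induction B using Finset.strongInduction with
  | H B ih =>
    by_cases hBA : (B : Set κ) ⊆ A
    · rw [← hAB.antisymm hBA]
      exact ⟨f, hf, hfR, eqOn_refl _ _⟩
    obtain ⟨c, ⟨hcB, hcA⟩, hcmax⟩ :=
      (B.finite_toSet.sdiff (t := A)).exists_maximal (sdiff_nonempty.2 hBA)
    have hmax : ∀ d ∈ B, c ≤ d → d = c := fun d hd hcd =>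
      (hcmax ⟨hd, fun hdA => hcA (hA hcd hdA)⟩ hcd).antisymm hcd
    have hAB' : A ⊆ B.erase c := fun d hd => by
      simpa using ⟨hAB hd, ne_of_mem_of_not_mem hd hcA⟩
    have hB' : IsLowerSet (B.erase c : Set κ) := fun d e hed hd => by
      simp only [Finset.coe_erase, mem_sdiff, mem_singleton_iff] at hd ⊢
      exact ⟨hB hed hd.1, fun hec => hd.2 (hmax d hd.1 (hec ▸ hed))⟩
    have hIio : Iio c ⊆ (B.erase c : Set κ) := fun d hd => by
      simpa using ⟨hB (le_of_lt hd) hcB, ne_of_lt hd⟩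
    have hclosed : IsClosed (p ⁻¹' (B.erase c : Set κ)) := by
      rw [← hB'.lowerClosure, coe_lowerClosure, preimage_iUnion₂]
      exact (Finset.finite_toSet _).isClosed_biUnion fun d _ => hp d
    obtain ⟨g, hg, hgR, hgf⟩ := ih _ (Finset.erase_ssubset hcB) hB' hAB'
      fun d hd => hext d (Finset.mem_of_mem_erase hd)
    obtain ⟨h, hh, hhR, hhg⟩ := exists_extension_insert hR (hp c) hclosed hIio (hext c hcB)
      (by simp) hg hgR
    rw [← Finset.coe_insert, Finset.insert_erase hcB] at hh hhR
    exact ⟨h, hh, hhR, fun x hx => (hhg (hAB' hx)).trans (hgf hx)⟩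

end ExtensionProperty

section Connectivity

theorem exists_collar_of_homotopic {E X : Type*} [NormedAddCommGroup E] [NormedSpace ℝ E]
    [TopologicalSpace X] [Nonempty X] {f₀ f₁ : C(sphere (0 : E) 1, X)} (h : f₀.Homotopic f₁) :
    ∃ q : E → X, ContinuousOn q {x | 2⁻¹ ≤ ‖x‖} ∧
      ∀ x : sphere (0 : E) 1, q ((2⁻¹ : ℝ) • (x : E)) = f₀ x ∧ q x = f₁ x := by
  obtain ⟨H⟩ := h
  let B : Set E := {x | 2⁻¹ ≤ ‖x‖}
  have hB0 (x : B) : ‖(x : E)‖ ≠ 0 := ((inv_pos.2 two_pos).trans_le x.2).ne'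
  let u : B → sphere (0 : E) 1 := fun x => ⟨‖(x : E)‖⁻¹ • x, by simp [norm_smul, hB0 x]⟩
  have hu : Continuous u :=
    Continuous.subtype_mk (.smul (.inv₀ (by fun_prop) hB0) continuous_subtype_val) _
  let q : C(B, X) := ⟨fun x => H (projIcc 0 1 zero_le_one (2 * ‖(x : E)‖ - 1), u x), by fun_prop⟩
  obtain ⟨Q, hQ, hQq⟩ := exists_continuousOn_extend q
  refine ⟨Q, hQ, fun x => ?_⟩
  have hx : ‖(x : E)‖ = 1 := mem_sphere_zero_iff_norm.1 x.2
  have hhalf : (2⁻¹ : ℝ) • (x : E) ∈ B := by simp [B, norm_smul, hx]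
  have hone : (x : E) ∈ B := by
    simp only [B, mem_ofPred_eq, hx]
    norm_num
  have huhalf : u ⟨_, hhalf⟩ = x := Subtype.ext (by simp [u, norm_smul, hx])
  have huone : u ⟨x, hone⟩ = x := Subtype.ext (by simp [u, hx])
  constructor
  · rw [hQq ⟨_, hhalf⟩]
    simp [q, huhalf, norm_smul, hx]
  · rw [hQq ⟨x, hone⟩]
    norm_num [q, huone, hx]

theorem exists_extension_closedBall_of_homotopic {E X : Type*} [NormedAddCommGroup E]
    [NormedSpace ℝ E] [TopologicalSpace X] {f₀ f₁ : C(sphere (0 : E) 1, X)}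
    (h : f₀.Homotopic f₁) (g₀ : C(closedBall (0 : E) 1, X))
    (hg₀ : ∀ x, g₀ (inclusion sphere_subset_closedBall x) = f₀ x) :
    ∃ g₁ : C(closedBall (0 : E) 1, X),
      ∀ x, g₁ (inclusion sphere_subset_closedBall x) = f₁ x := by
  have : Nonempty X := ⟨g₀ ⟨0, by simp⟩⟩
  obtain ⟨G, hG, hGg⟩ := exists_continuousOn_extend g₀
  obtain ⟨Q, hQ, hQf⟩ := exists_collar_of_homotopic h
  have hdil : MapsTo (fun x : E => (2 : ℝ) • x) (closedBall 0 2⁻¹) (closedBall 0 1) := by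
    intro x hx
    rw [mem_closedBall_zero_iff] at hx
    simp only [mem_closedBall_zero_iff, norm_smul, Real.norm_ofNat]
    linarith
  have hoverlap : EqOn (fun x => G ((2 : ℝ) • x)) Q
      (closedBall 0 2⁻¹ ∩ {x | 2⁻¹ ≤ ‖x‖}) := by
    rintro x ⟨hxA, hxB⟩
    have hx : ‖x‖ = 2⁻¹ := (mem_closedBall_zero_iff.1 hxA).antisymm hxB
    let y : sphere (0 : E) 1 := ⟨(2 : ℝ) • x, by simp [norm_smul, hx]⟩
    calc
      G ((2 : ℝ) • x) = f₀ y := (hGg (inclusion sphere_subset_closedBall y)).trans (hg₀ y)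
      _ = Q ((2⁻¹ : ℝ) • (2 : ℝ) • x) := (hQf y).1.symm
      _ = Q x := by rw [smul_smul]; norm_num
  obtain ⟨g, hg, -, hgQ⟩ := exists_continuousOn_union isClosed_closedBall
    (isClosed_le continuous_const continuous_norm) (hG.comp (by fun_prop) hdil) hQ hoverlap
  have hcover (x : E) : x ∈ closedBall 0 2⁻¹ ∪ {x | 2⁻¹ ≤ ‖x‖} :=
    (le_total ‖x‖ 2⁻¹).imp_left mem_closedBall_zero_iff.2
  refine ⟨⟨fun x => g x, (hg.mono fun x _ => hcover x).domRestrict⟩, fun x => ?_⟩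
  refine Eq.trans (hgQ ?_) (hQf x).2
  simp only [mem_ofPred_eq, mem_sphere_zero_iff_norm.1 x.2]
  norm_num

variable {X Y : Type*} [TopologicalSpace X] [TopologicalSpace Y] {n : ℤ}

theorem IsNConnected.of_homotopic_id {r : C(X, Y)} {s : C(Y, X)}
    (h : (s.comp r).Homotopic (.id X)) (hY : IsNConnected n Y) : IsNConnected n X := by
  refine ⟨fun hn => (hY.1 hn).map s, fun i hi f => ?_⟩
  obtain ⟨g, hg⟩ := hY.2 i hi (r.comp f)
  exact exists_extension_closedBall_of_homotopic (h.comp (.refl f)) (s.comp g)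
    fun x => congrArg s (hg x)

theorem IsNConnected.of_contractibleSpace [ContractibleSpace X] : IsNConnected n X := by
  obtain ⟨x, hx⟩ := id_nullhomotopic X
  refine .of_homotopic_id (r := .const X ()) (s := .const Unit x) hx.symm
    ⟨fun _ => ⟨()⟩, fun i _ f => ⟨.const _ (), fun _ => rfl⟩⟩

theorem homotopic_of_segment_subset {E : Type*} [AddCommGroup E] [TopologicalSpace E]
    [IsTopologicalAddGroup E] [Module ℝ E] [ContinuousSMul ℝ E] {S : Set E} {f g : C(X, S)}
    (h : ∀ x, segment ℝ (f x : E) (g x) ⊆ S) : f.Homotopic g := by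
  let val : C(S, E) := ⟨Subtype.val, continuous_subtype_val⟩
  let H := ContinuousMap.Homotopy.affine (val.comp f) (val.comp g)
  have hHS (p : unitInterval × X) : H p ∈ S := by
    refine h p.2 ?_
    rw [segment_eq_image_lineMap]
    exact mem_image_of_mem _ p.1.2
  exact ⟨⟨⟨fun p => ⟨H p, hHS p⟩, H.continuous.subtype_mk hHS⟩,
    fun x => Subtype.ext (H.map_zero_left x), fun x => Subtype.ext (H.map_one_left x)⟩⟩

/-- Maps from the unit sphere of `E` into `R` extend over the closed unit ball of `E`. -/
def FillsSphere (E : Type*) [NormedAddCommGroup E] {T : Type*} [TopologicalSpace T]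
    (R : Set T) : Prop :=
  ExtensionProperty (sphere (0 : E) 1) (closedBall 0 1) R

theorem exists_homeomorph_image_closedBall_sphere {E F : Type*} [NormedAddCommGroup E]
    [NormedSpace ℝ E] [FiniteDimensional ℝ E] [NormedAddCommGroup F] [NormedSpace ℝ F]
    [FiniteDimensional ℝ F] (h : finrank ℝ E = finrank ℝ F) :
    ∃ φ : E ≃ₜ F, φ '' sphere 0 1 = sphere 0 1 ∧ φ '' closedBall 0 1 = closedBall 0 1 := by
  let e : E ≃L[ℝ] F := ContinuousLinearEquiv.ofFinrankEq h
  have hconv : Convex ℝ (e '' ball 0 1) := (convex_ball (0 : E) 1).linear_image e.toLinearMap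
  have hopen : IsOpen (e '' ball 0 1) := e.toHomeomorph.isOpenMap _ isOpen_ball
  have hint : (interior (e '' ball 0 1)).Nonempty := by
    rw [hopen.interior_eq]
    exact (nonempty_ball.2 one_pos).image e
  obtain ⟨ψ, -, hψcl, hψfr⟩ := exists_homeomorph_image_interior_closure_frontier_eq_unitBall
    hconv hint ((isBounded_ball (x := (0 : E))).image (e : E →L[ℝ] F))
  refine ⟨e.toHomeomorph.trans ψ, ?_, ?_⟩
  · rw [← hψfr, ← frontier_ball (0 : E) one_ne_zero]
    exact (image_comp ψ e _).trans (congrArg _ (e.toHomeomorph.image_frontier _))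
  · rw [← hψcl, ← closure_ball (0 : E) one_ne_zero]
    exact (image_comp ψ e _).trans (congrArg _ (e.toHomeomorph.image_closure _))

variable {T : Type*} [TopologicalSpace T] {R : Set T}

theorem FillsSphere.of_finrank_eq {E F : Type*} [NormedAddCommGroup E] [NormedSpace ℝ E]
    [FiniteDimensional ℝ E] [NormedAddCommGroup F] [NormedSpace ℝ F] [FiniteDimensional ℝ F]
    (hR : FillsSphere E R) (h : finrank ℝ E = finrank ℝ F) : FillsSphere F R := by
  obtain ⟨φ, hsphere, hball⟩ := exists_homeomorph_image_closedBall_sphere h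
  exact ExtensionProperty.of_homeomorph hR φ hsphere hball

theorem fillsSphere_iff_nonempty {E : Type*} [NormedAddCommGroup E] [Subsingleton E]
    [Nonempty T] : FillsSphere E R ↔ R.Nonempty := by
  have hsphere : sphere (0 : E) 1 = ∅ := sphere_eq_empty_of_subsingleton one_ne_zero
  constructor
  · intro h
    obtain ⟨g, -, hgR, -⟩ := h (fun _ => Classical.arbitrary T) continuousOn_const
      (hsphere ▸ mapsTo_empty _ _)
    exact ⟨g 0, hgR (by simp)⟩
  · rintro ⟨p, hp⟩ f - -
    exact ⟨fun _ => p, continuousOn_const, fun _ _ => hp, by simp [hsphere]⟩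

theorem isNConnected_iff_fillsSphere [Nonempty T] {n : ℤ} : IsNConnected n R ↔
    ∀ d : ℕ, (d : ℤ) ≤ n + 1 → FillsSphere (EuclideanSpace ℝ (Fin d)) R := by
  have hnonempty : Nonempty R ↔ FillsSphere (EuclideanSpace ℝ (Fin 0)) R :=
    nonempty_coe_sort.trans fillsSphere_iff_nonempty.symm
  have hfill (i : ℕ) := extensionProperty_iff_exists_continuousMap (R := R)
    (sphere_subset_closedBall (x := (0 : EuclideanSpace ℝ (Fin (i + 1)))) (ε := 1))
  constructor
  · rintro ⟨h0, h⟩ (_ | i) hi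
    · exact hnonempty.1 (h0 (by omega))
    · exact (hfill i).2 (h i (by push_cast at hi; omega))
  · intro h
    exact ⟨fun hn => hnonempty.2 (h 0 (by push_cast; omega)),
      fun i hi => (hfill i).1 (h (i + 1) (by push_cast; omega))⟩

theorem IsNConnected.fillsSphere [Nonempty T] {n : ℤ} (hR : IsNConnected n R) (E : Type*)
    [NormedAddCommGroup E] [NormedSpace ℝ E] [FiniteDimensional ℝ E]
    (hE : (finrank ℝ E : ℤ) ≤ n + 1) : FillsSphere E R :=
  (isNConnected_iff_fillsSphere.1 hR _ hE).of_finrank_eq finrank_euclideanSpace_fin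

end Connectivity

section Grid

variable {ι : Type*} {N : ℕ}

/-- The smallest cell containing `x` in the cubical grid of mesh `1 / N` on `ι → ℝ`. A cell is
encoded as a family of integer intervals, standing for `1 / N` times their product, so that
inclusion of cells is the order of `ι → NonemptyInterval ℤ`. -/
noncomputable def gridCarrier (N : ℕ) (x : ι → ℝ) : ι → NonemptyInterval ℤ :=
  fun j => ⟨(⌊N * x j⌋, ⌈N * x j⌉), Int.floor_le_ceil _⟩

theorem gridCarrier_le_iff {x : ι → ℝ} {c : ι → NonemptyInterval ℤ} :
    gridCarrier N x ≤ c ↔ ∀ j, ((c j).fst : ℝ) ≤ N * x j ∧ N * x j ≤ (c j).snd :=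
  forall_congr' fun _ => and_congr Int.le_floor Int.ceil_le

theorem gridCarrier_lt_iff {x : ι → ℝ} {c : ι → NonemptyInterval ℤ} :
    gridCarrier N x < c ↔ gridCarrier N x ≤ c ∧
      ∃ j, ((c j).fst : ℝ) + 1 ≤ N * x j ∨ N * x j ≤ (c j).snd - 1 := by
  have hge : c ≤ gridCarrier N x ↔ ∀ j, ⌊N * x j⌋ ≤ (c j).fst ∧ (c j).snd ≤ ⌈N * x j⌉ := Iff.rfl
  rw [lt_iff_le_not_ge, hge]
  simp only [not_forall, not_and_or, not_le, Int.lt_floor_iff, Int.ceil_lt_iff]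

theorem isClosed_preimage_gridCarrier_Iic (c : ι → NonemptyInterval ℤ) :
    IsClosed (gridCarrier N ⁻¹' Iic c) := by
  have : gridCarrier N ⁻¹' Iic c =
      {x | ∀ j, ((c j).fst : ℝ) ≤ N * x j ∧ N * x j ≤ ((c j).snd : ℝ)} :=
    ext fun _ => gridCarrier_le_iff
  rw [this, ofPred_forall]
  exact isClosed_iInter fun j =>
    isClosed_Icc.preimage (f := fun x : ι → ℝ => N * x j) (by fun_prop)

theorem mem_closedBall_pi_iff [Fintype ι] {x : ι → ℝ} :
    x ∈ closedBall (0 : ι → ℝ) 1 ↔ ∀ j, |x j| ≤ 1 := by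
  rw [mem_closedBall_zero_iff]
  exact pi_norm_le_iff_of_nonneg zero_le_one

theorem mem_sphere_pi_iff [Fintype ι] {x : ι → ℝ} :
    x ∈ sphere (0 : ι → ℝ) 1 ↔ x ∈ closedBall (0 : ι → ℝ) 1 ∧ ∃ j, 1 ≤ |x j| := by
  have hlt : ‖x‖ < 1 ↔ ∀ j, |x j| < 1 := pi_norm_lt_iff one_pos
  rw [mem_sphere_zero_iff_norm, mem_closedBall_zero_iff, le_antisymm_iff, ← not_lt (a := ‖x‖), hlt]
  simp

/-- The directions in which the grid cell `c` has positive length. -/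
abbrev gridEdges (c : ι → NonemptyInterval ℤ) : Type _ := {j // (c j).fst < (c j).snd}

/-- Affine coordinates in which a grid cell with edges of length `1 / N` becomes the cube
`[-1, 1]` to the power `gridEdges c`. -/
def gridChart (N : ℕ) (c : ι → NonemptyInterval ℤ) (x : ι → ℝ) : gridEdges c → ℝ :=
  fun j => 2 * (N * x j) - ((c j).fst + (c j).snd)

/-- The parametrisation of a grid cell by a cube, inverse to `gridChart`. -/
noncomputable def gridChartInv (N : ℕ) (c : ι → NonemptyInterval ℤ) (y : gridEdges c → ℝ) : ι → ℝ :=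
  fun j => ((c j).fst + (c j).snd + if h : (c j).fst < (c j).snd then y ⟨j, h⟩ else 0) / (2 * N)

theorem continuous_gridChart (c : ι → NonemptyInterval ℤ) : Continuous (gridChart N c) := by
  unfold gridChart
  fun_prop

theorem continuous_gridChartInv (c : ι → NonemptyInterval ℤ) : Continuous (gridChartInv N c) := by
  refine continuous_pi fun j => ?_
  by_cases h : (c j).fst < (c j).snd
  · simp only [gridChartInv, h, dite_true]
    fun_prop
  · simp only [gridChartInv, h, dite_false]
    fun_prop

variable {c : ι → NonemptyInterval ℤ}

theorem two_mul_gridChartInv (hN : N ≠ 0) (y : gridEdges c → ℝ) (j : ι) :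
    2 * (N * gridChartInv N c y j) = (c j).fst + (c j).snd +
      if h : (c j).fst < (c j).snd then y ⟨j, h⟩ else 0 := by
  simp only [gridChartInv]
  field_simp

theorem snd_eq_fst_of_not_lt {j : ι} (h : ¬ (c j).fst < (c j).snd) :
    ((c j).snd : ℝ) = (c j).fst := by
  exact_mod_cast (not_lt.1 h).antisymm (c j).fst_le_snd

theorem gridChart_gridChartInv_leftInvOn (hN : N ≠ 0) :
    LeftInvOn (gridChartInv N c) (gridChart N c) (gridCarrier N ⁻¹' Iic c) := fun x hx => by
  ext j
  have hxj := gridCarrier_le_iff.1 hx j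
  refine mul_left_cancel₀ (Nat.cast_ne_zero (R := ℝ).2 hN) (mul_left_cancel₀ two_ne_zero
    ((two_mul_gridChartInv hN _ j).trans ?_))
  split_ifs with h
  · simp only [gridChart]
    ring
  · linarith [snd_eq_fst_of_not_lt h]

theorem snd_eq_fst_add_one (hc : ∀ j, (c j).snd ≤ (c j).fst + 1) (j : gridEdges c) :
    ((c j).snd : ℝ) = (c j).fst + 1 := by
  exact_mod_cast (hc j).antisymm j.2

/-- The cells of the grid of mesh `1 / N` that subdivide the cube `[-1, 1] ^ ι`. -/
def gridCube (N : ℕ) (ι : Type*) : Set (ι → NonemptyInterval ℤ) :=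
  {c | ∀ j, (-N ≤ (c j).fst ∧ (c j).snd ≤ N) ∧ (c j).snd ≤ (c j).fst + 1}

/-- The cells of the grid of mesh `1 / N` that subdivide the boundary of the cube `[-1, 1] ^ ι`. -/
def gridCubeBoundary (N : ℕ) (ι : Type*) : Set (ι → NonemptyInterval ℤ) :=
  {c ∈ gridCube N ι | ∃ j, N ≤ (c j).fst ∨ (c j).snd ≤ -N}

theorem isLowerSet_gridCube : IsLowerSet (gridCube N ι) := fun _ _ hdc hc j =>
  ⟨⟨(hc j).1.1.trans (hdc j).1, (hdc j).2.trans (hc j).1.2⟩,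
    (hdc j).2.trans <| (hc j).2.trans <| add_le_add_left (hdc j).1 1⟩

theorem isLowerSet_gridCubeBoundary : IsLowerSet (gridCubeBoundary N ι) := fun _ _ hdc hc =>
  ⟨isLowerSet_gridCube hdc hc.1, hc.2.imp fun j =>
    Or.imp (fun h => h.trans (hdc j).1) fun h => (hdc j).2.trans h⟩

theorem finite_gridCube [Finite ι] : (gridCube N ι).Finite := by
  have hfin : {I : NonemptyInterval ℤ | -N ≤ I.fst ∧ I.snd ≤ N}.Finite :=
    ((finite_Icc (-(N : ℤ)) N).prod (finite_Icc (-(N : ℤ)) N)).preimage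
      NonemptyInterval.toProd_injective.injOn |>.subset fun I hI =>
        ⟨⟨hI.1, I.fst_le_snd.trans hI.2⟩, hI.1.trans I.fst_le_snd, hI.2⟩
  exact (Finite.pi' fun _ : ι => hfin).subset fun c hc j => (hc j).1

/-- The top-dimensional grid cell `∏ j, [m j, m j + 1]`. -/
def gridUnitCube (m : ι → ℤ) : ι → NonemptyInterval ℤ :=
  fun j => ⟨(m j, m j + 1), (lt_add_one _).le⟩

/-- The intersection of the sets `L m` over the top-dimensional cells `m` containing `c`. -/
def gridRegion {T : Type*} (L : (ι → ℤ) → Set T) (c : ι → NonemptyInterval ℤ) : Set T :=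
  ⋂ (m) (_ : c ≤ gridUnitCube m), L m

theorem monotone_gridRegion {T : Type*} (L : (ι → ℤ) → Set T) : Monotone (gridRegion L) :=
  fun _ _ hcd => biInter_mono (fun _ hm => hcd.trans hm) fun _ _ => subset_rfl

/-- A cell all of whose edges have positive length lies in just one top-dimensional cell. -/
theorem gridRegion_eq_or {T : Type*} {U V : Set T} {L : (ι → ℤ) → Set T}
    (hL : ∀ m, L m = U ∨ L m = V) {c : ι → NonemptyInterval ℤ}
    (hc : ∀ j, (c j).snd ≤ (c j).fst + 1) :
    gridRegion L c = U ∨ gridRegion L c = V ∨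
      gridRegion L c = U ∩ V ∧ ∃ j, ¬ (c j).fst < (c j).snd := by
  have hne : {m | c ≤ gridUnitCube m}.Nonempty := ⟨fun j => (c j).fst, fun j => ⟨le_rfl, hc j⟩⟩
  by_cases hU : ∀ m, c ≤ gridUnitCube m → L m = U
  · exact Or.inl ((iInter₂_congr hU).trans (biInter_const hne U))
  by_cases hV : ∀ m, c ≤ gridUnitCube m → L m = V
  · exact Or.inr (Or.inl ((iInter₂_congr hV).trans (biInter_const hne V)))
  push Not at hU hV
  obtain ⟨m, hm, hmU⟩ := hU
  obtain ⟨m', hm', hmV⟩ := hV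
  have hLm : L m = V := (hL m).resolve_left hmU
  have hLm' : L m' = U := (hL m').resolve_right hmV
  refine Or.inr (Or.inr ⟨Subset.antisymm (fun y hy => ?_) fun y hy => ?_, ?_⟩)
  · exact ⟨hLm' ▸ mem_iInter₂.1 hy m' hm', hLm ▸ mem_iInter₂.1 hy m hm⟩
  · exact mem_iInter₂.2 fun i _ => (hL i).elim (fun h => h ▸ hy.1) fun h => h ▸ hy.2
  · by_contra! hlt
    refine hmU ?_
    have hmm' : m = m' := funext fun j => by
      have hj : m j ≤ (c j).fst ∧ (c j).snd ≤ m j + 1 := hm j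
      have hj' : m' j ≤ (c j).fst ∧ (c j).snd ≤ m' j + 1 := hm' j
      have := hlt j
      omega
    exact hmm' ▸ hLm'

section Fintype

variable [Fintype ι]

theorem mapsTo_gridChart_closedBall (hc : ∀ j, (c j).snd ≤ (c j).fst + 1) :
    MapsTo (gridChart N c) (gridCarrier N ⁻¹' Iic c) (closedBall 0 1) := fun x hx =>
  mem_closedBall_pi_iff.2 fun j => by
    have hxj := gridCarrier_le_iff.1 hx j
    rw [snd_eq_fst_add_one hc] at hxj
    simp only [gridChart, snd_eq_fst_add_one hc, abs_le]
    constructor <;> linarith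

theorem mapsTo_gridChart_sphere (hc : ∀ j, (c j).snd ≤ (c j).fst + 1) :
    MapsTo (gridChart N c) (gridCarrier N ⁻¹' Iio c) (sphere 0 1) := fun x hx => by
  obtain ⟨hle, j, hj⟩ := gridCarrier_lt_iff.1 hx
  have hxj := gridCarrier_le_iff.1 hle j
  have hlt : (c j).fst < (c j).snd := by
    have : ((c j).fst : ℝ) < (c j).snd := by rcases hj with hj | hj <;> linarith
    exact_mod_cast this
  have hedge := snd_eq_fst_add_one hc ⟨j, hlt⟩
  refine mem_sphere_pi_iff.2 ⟨mapsTo_gridChart_closedBall hc hle, ⟨j, hlt⟩, ?_⟩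
  simp only [gridChart, le_abs]
  exact hj.imp (fun _ => by linarith) fun _ => by linarith

theorem mapsTo_gridChartInv_sphere (hN : N ≠ 0) (hc : ∀ j, (c j).snd ≤ (c j).fst + 1) :
    MapsTo (gridChartInv N c) (sphere 0 1) (gridCarrier N ⁻¹' Iio c) := fun y hy => by
  obtain ⟨hball, j, hj⟩ := mem_sphere_pi_iff.1 hy
  refine gridCarrier_lt_iff.2 ⟨gridCarrier_le_iff.2 fun i => ?_, j, ?_⟩
  · have hyi := two_mul_gridChartInv hN y i
    split_ifs at hyi with h
    · have := abs_le.1 (mem_closedBall_pi_iff.1 hball ⟨i, h⟩)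
      have := snd_eq_fst_add_one hc ⟨i, h⟩
      constructor <;> linarith
    · have := snd_eq_fst_of_not_lt h
      constructor <;> linarith
  · have hyj := two_mul_gridChartInv hN y j
    rw [dif_pos j.2] at hyj
    have := snd_eq_fst_add_one hc j
    exact (le_abs.1 hj).imp (fun _ => by linarith) fun _ => by linarith

theorem FillsSphere.extensionProperty_gridCell {T : Type*} [TopologicalSpace T] {R : Set T}
    (hN : N ≠ 0) (hc : ∀ j, (c j).snd ≤ (c j).fst + 1) (h : FillsSphere (gridEdges c → ℝ) R) :
    ExtensionProperty (gridCarrier N ⁻¹' Iio c) (gridCarrier N ⁻¹' Iic c) R :=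
  h.of_leftInvOn (continuous_gridChart c).continuousOn (mapsTo_gridChart_closedBall hc)
    (mapsTo_gridChart_sphere hc) (continuous_gridChartInv c).continuousOn
    (mapsTo_gridChartInv_sphere hN hc)
    ((gridChart_gridChartInv_leftInvOn hN).mono (preimage_mono Iio_subset_Iic_self))

theorem preimage_gridCube (hN : N ≠ 0) : gridCarrier N ⁻¹' gridCube N ι = closedBall 0 1 := by
  ext x
  have hN' : (0 : ℝ) < N := Nat.cast_pos.2 hN.bot_lt
  have hlower (j : ι) : -(N : ℝ) ≤ N * x j ↔ -1 ≤ x j := by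
    simpa using mul_le_mul_iff_right₀ (b := -1) (c := x j) hN'
  rw [mem_closedBall_pi_iff]
  simp [gridCarrier, gridCube, Int.le_floor, Int.ceil_le, hlower, mul_le_iff_le_one_right hN',
    abs_le, (Int.lt_floor_add_one _).le]

theorem preimage_gridCubeBoundary (hN : N ≠ 0) :
    gridCarrier N ⁻¹' gridCubeBoundary N ι = sphere 0 1 := by
  ext x
  have hN' : (0 : ℝ) < N := Nat.cast_pos.2 hN.bot_lt
  have hupper (j : ι) : N * x j ≤ -(N : ℝ) ↔ x j ≤ -1 := by
    simpa using mul_le_mul_iff_right₀ (b := x j) (c := -1) hN'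
  rw [mem_sphere_pi_iff, ← preimage_gridCube hN]
  refine and_congr_right fun _ => exists_congr fun j => ?_
  simp [gridCarrier, Int.le_floor, Int.ceil_le, hupper, le_mul_iff_one_le_right hN', le_abs, le_neg]

theorem exists_extension_closedBall_of_grid {T : Type*} [TopologicalSpace T] (hN : N ≠ 0)
    {R : (ι → NonemptyInterval ℤ) → Set T} (hR : Monotone R)
    (hfill : ∀ c, (∀ j, (c j).snd ≤ (c j).fst + 1) → FillsSphere (gridEdges c → ℝ) (R c))
    {f : (ι → ℝ) → T} (hf : ContinuousOn f (sphere 0 1))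
    (hfR : ∀ x ∈ sphere 0 1, f x ∈ R (gridCarrier N x)) :
    ∃ g : (ι → ℝ) → T, ContinuousOn g (closedBall 0 1) ∧
      (∀ x ∈ closedBall 0 1, g x ∈ R (gridCarrier N x)) ∧ EqOn g f (sphere 0 1) := by
  obtain ⟨B, hB⟩ := (finite_gridCube (N := N) (ι := ι)).exists_finset_coe
  rw [← preimage_gridCubeBoundary hN] at hf hfR ⊢
  rw [← preimage_gridCube hN, ← hB]
  refine exists_extension_of_isLowerSet isClosed_preimage_gridCarrier_Iic hR
    isLowerSet_gridCubeBoundary hf hfR B (hB ▸ isLowerSet_gridCube) (hB ▸ sep_subset _ _)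
    fun c hc => ?_
  have hside : ∀ j, (c j).snd ≤ (c j).fst + 1 := fun j => (hB.subset hc j).2
  exact (hfill c hside).extensionProperty_gridCell hN hside

theorem dist_le_of_gridCarrier_le_gridUnitCube (hN : N ≠ 0) {m : ι → ℤ} {x y : ι → ℝ}
    (hx : gridCarrier N x ≤ gridUnitCube m) (hy : gridCarrier N y ≤ gridUnitCube m) :
    dist x y ≤ 1 / N := by
  have hN' : (0 : ℝ) < N := Nat.cast_pos.2 hN.bot_lt
  refine (dist_pi_le_iff (by positivity)).2 fun j => ?_
  have hxj := gridCarrier_le_iff.1 hx j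
  have hyj := gridCarrier_le_iff.1 hy j
  simp only [gridUnitCube, Int.cast_add, Int.cast_one] at hxj hyj
  rw [Real.dist_eq, le_div_iff₀ hN', ← abs_of_pos hN', ← abs_mul, abs_le]
  constructor <;> linarith

end Fintype

theorem exists_grid_mapsTo_or [Finite ι] {T : Type*} [TopologicalSpace T] {f : (ι → ℝ) → T}
    {K : Set (ι → ℝ)} (hK : IsCompact K) (hf : ContinuousOn f K) {O P : Set T} (hO : IsOpen O)
    (hP : IsOpen P) (hfOP : MapsTo f K (O ∪ P)) :
    ∃ N : ℕ, N ≠ 0 ∧ ∀ m, MapsTo f (K ∩ gridCarrier N ⁻¹' Iic (gridUnitCube m)) O ∨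
      MapsTo f (K ∩ gridCarrier N ⁻¹' Iic (gridUnitCube m)) P := by
  cases nonempty_fintype ι
  obtain ⟨u, hu, hfu⟩ := continuousOn_iff'.1 hf O hO
  obtain ⟨v, hv, hfv⟩ := continuousOn_iff'.1 hf P hP
  have hcover : K ⊆ ⋃ b : Bool, cond b u v := fun x hx => by
    rw [← union_eq_iUnion]
    exact (hfOP hx).imp (fun h => (hfu.subset ⟨h, hx⟩).1) fun h => (hfv.subset ⟨h, hx⟩).1
  obtain ⟨δ, hδ, hball⟩ := lebesgue_number_lemma_of_metric hK (Bool.rec hv hu) hcover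
  obtain ⟨n, hn⟩ := exists_nat_one_div_lt hδ
  refine ⟨n + 1, n.succ_ne_zero, fun m => ?_⟩
  rcases (K ∩ gridCarrier (n + 1) ⁻¹' Iic (gridUnitCube m)).eq_empty_or_nonempty with
    hempty | ⟨x, hxK, hx⟩
  · exact Or.inl (hempty ▸ mapsTo_empty _ _)
  have hnear : K ∩ gridCarrier (n + 1) ⁻¹' Iic (gridUnitCube m) ⊆ ball x δ := fun y hy =>
    (dist_le_of_gridCarrier_le_gridUnitCube n.succ_ne_zero hy.2 hx).trans_lt (by exact_mod_cast hn)
  obtain ⟨b, hb⟩ := hball x hxK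
  cases b with
  | true => exact Or.inl fun y hy => (hfu.symm.subset ⟨hb (hnear hy), hy.1⟩).1
  | false => exact Or.inr fun y hy => (hfv.symm.subset ⟨hb (hnear hy), hy.1⟩).1

end Grid

section OpenCover

variable {T : Type*} [TopologicalSpace T] {n : ℤ}

theorem fillsSphere_gridRegion [Nonempty T] {ι : Type*} [Fintype ι]
    (hι : (Fintype.card ι : ℤ) ≤ n + 1) {U V : Set T} (hU : IsNConnected n U)
    (hV : IsNConnected n V) (hUV : IsNConnected (n - 1) ↥(U ∩ V)) {L : (ι → ℤ) → Set T}
    (hL : ∀ m, L m = U ∨ L m = V) {c : ι → NonemptyInterval ℤ}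
    (hc : ∀ j, (c j).snd ≤ (c j).fst + 1) : FillsSphere (gridEdges c → ℝ) (gridRegion L c) := by
  have hcard : Fintype.card (gridEdges c) ≤ Fintype.card ι := Fintype.card_subtype_le _
  rcases gridRegion_eq_or hL hc with h | h | ⟨h, j, hj⟩
  · exact h ▸ hU.fillsSphere _ (by rw [finrank_fintype_fun_eq_card]; omega)
  · exact h ▸ hV.fillsSphere _ (by rw [finrank_fintype_fun_eq_card]; omega)
  · have hcard' : Fintype.card (gridEdges c) < Fintype.card ι := Fintype.card_subtype_lt hj
    exact h ▸ hUV.fillsSphere _ (by rw [finrank_fintype_fun_eq_card]; omega)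

theorem FillsSphere.of_isOpen_cover [Nonempty T] {ι : Type*} [Fintype ι]
    (hι : (Fintype.card ι : ℤ) ≤ n + 1) {X O P : Set T} (hO : IsOpen O) (hP : IsOpen P)
    (hX : X ⊆ O ∪ P) (hXO : IsNConnected n ↥(X ∩ O)) (hXP : IsNConnected n ↥(X ∩ P))
    (hXOP : IsNConnected (n - 1) ↥(X ∩ (O ∩ P))) : FillsSphere (ι → ℝ) X := by
  classical
  intro f hf hfX
  obtain ⟨N, hN, hNf⟩ := exists_grid_mapsTo_or (isCompact_sphere _ _) hf hO hP (hfX.mono_right hX)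
  let L : (ι → ℤ) → Set T := fun m =>
    if MapsTo f (sphere 0 1 ∩ gridCarrier N ⁻¹' Iic (gridUnitCube m)) O then X ∩ O else X ∩ P
  have hL (m) : L m = X ∩ O ∨ L m = X ∩ P := ite_eq_or_eq _ _ _
  have hfL : ∀ x ∈ sphere 0 1, f x ∈ gridRegion L (gridCarrier N x) := fun x hx =>
    mem_iInter₂.2 fun m hm => by
      simp only [L]
      split_ifs with h
      · exact ⟨hfX hx, h ⟨hx, hm⟩⟩
      · exact ⟨hfX hx, (hNf m).resolve_left h ⟨hx, hm⟩⟩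
  rw [inter_inter_distrib_left] at hXOP
  obtain ⟨g, hg, hgL, hgf⟩ := exists_extension_closedBall_of_grid hN (monotone_gridRegion L)
    (fun c hc => fillsSphere_gridRegion hι hXO hXP hXOP hL hc) hf hfL
  refine ⟨g, hg, fun x hx => ?_, hgf⟩
  have hgx := mem_iInter₂.1 (hgL x hx) (fun j => ⌊N * x j⌋) fun j =>
    ⟨le_rfl, Int.ceil_le_floor_add_one _⟩
  rcases hL fun j => ⌊N * x j⌋ with h | h
  · exact (h ▸ hgx).1
  · exact (h ▸ hgx).1

theorem IsNConnected.of_isOpen_cover {X O P : Set T} (hO : IsOpen O) (hP : IsOpen P)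
    (hX : X ⊆ O ∪ P) (hXO : IsNConnected n ↥(X ∩ O)) (hXP : IsNConnected n ↥(X ∩ P))
    (hXOP : IsNConnected (n - 1) ↥(X ∩ (O ∩ P))) : IsNConnected n X := by
  rcases isEmpty_or_nonempty T with hT | hT
  · rwa [Subsingleton.elim X (X ∩ O)]
  refine isNConnected_iff_fillsSphere.2 fun d hd => ?_
  have hfill : FillsSphere (Fin d → ℝ) X :=
    .of_isOpen_cover (by rwa [Fintype.card_fin]) hO hP hX hXO hXP hXOP
  exact hfill.of_finrank_eq (by simp)

end OpenCover

section SimplicialComplex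

variable {V : Type*}

/-- The realization of a simplicial complex, as a subset of `V → ℝ`. -/
def realizationSet (K : Set (Finset V)) : Set (V → ℝ) :=
  {x | (∀ v, 0 ≤ x v) ∧ (∑ᶠ v, x v) = 1 ∧ ∃ s ∈ K, {v | x v ≠ 0} = ↑s}

/-- The closed simplex spanned by `s`. -/
def closedSimplex (s : Finset V) : Set (V → ℝ) :=
  {x | (∀ v, 0 ≤ x v) ∧ (∀ v ∉ s, x v = 0) ∧ ∑ v ∈ s, x v = 1}

theorem closedSimplex_mono {s t : Finset V} (hst : s ⊆ t) : closedSimplex s ⊆ closedSimplex t :=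
  fun _ ⟨h0, hs, h1⟩ => ⟨h0, fun v hv => hs v fun h => hv (hst h),
    h1 ▸ (Finset.sum_subset hst fun v _ hv => hs v hv).symm⟩

theorem convex_closedSimplex (s : Finset V) : Convex ℝ (closedSimplex s) := by
  rintro x ⟨hx0, hxs, hx1⟩ y ⟨hy0, hys, hy1⟩ a b ha hb hab
  refine ⟨fun v => ?_, fun v hv => by simp [hxs v hv, hys v hv], ?_⟩
  · exact add_nonneg (mul_nonneg ha (hx0 v)) (mul_nonneg hb (hy0 v))
  · simp [Finset.sum_add_distrib, ← Finset.mul_sum, hx1, hy1, hab]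

theorem single_mem_closedSimplex [DecidableEq V] {s : Finset V} {v : V} (hv : v ∈ s) :
    Pi.single v 1 ∈ closedSimplex s :=
  ⟨fun w => (Pi.single_nonneg.2 zero_le_one : (0 : V → ℝ) ≤ Pi.single v 1) w,
    fun _ hw => Pi.single_eq_of_ne (ne_of_mem_of_not_mem hv hw).symm _,
    by rw [Finset.sum_pi_single', if_pos hv]⟩

theorem mem_of_mem_closedSimplex {s : Finset V} {v : V} {x : V → ℝ} (hx : x ∈ closedSimplex s)
    (hv : 0 < x v) : v ∈ s :=
  by_contra fun h => hv.ne' (hx.2.1 v h)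

theorem mem_realizationSet_iff {K : Set (Finset V)} (hK : IsLowerSet K) {x : V → ℝ} :
    x ∈ realizationSet K ↔ ∃ s ∈ K, x ∈ closedSimplex s := by
  classical
  constructor
  · rintro ⟨h0, h1, s, hs, hxs⟩
    refine ⟨s, hs, h0, fun v hv => not_not.1 fun h => hv (hxs.subset h), ?_⟩
    rw [← h1, finsum_eq_sum_of_support_subset x hxs.subset]
  · rintro ⟨s, hs, h0, hxs, h1⟩
    have hsupp : {v | x v ≠ 0} ⊆ s := fun v hv => not_not.1 fun h => hv (hxs v h)
    refine ⟨h0, (finsum_eq_sum_of_support_subset x hsupp).trans h1, s.filter (x · ≠ 0),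
      hK (Finset.filter_subset _ s) hs, ?_⟩
    ext v
    simpa using fun hv => hsupp hv

theorem IsNConnected.realizationSet_inter {K K' : Set (Finset V)} (hK : IsLowerSet K)
    {C : Set (V → ℝ)} (hC : Convex ℝ C) {r s : (V → ℝ) → V → ℝ}
    (hr : ContinuousOn r (realizationSet K ∩ C)) (hs : ContinuousOn s (realizationSet K'))
    (hrK' : MapsTo r (realizationSet K ∩ C) (realizationSet K'))
    (hsK : MapsTo s (realizationSet K') (realizationSet K ∩ C))
    (hsr : ∀ t ∈ K, ∀ x ∈ closedSimplex t ∩ C, s (r x) ∈ closedSimplex t) {n : ℤ}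
    (h : IsNConnected n (realization K')) : IsNConnected n ↥(realizationSet K ∩ C) := by
  refine .of_homotopic_id (Y := realizationSet K') (r := ⟨hrK'.restrict, hr.mapsToRestrict hrK'⟩)
    (s := ⟨hsK.restrict, hs.mapsToRestrict hsK⟩) (homotopic_of_segment_subset fun x => ?_) h
  obtain ⟨t, ht, hxt⟩ := (mem_realizationSet_iff hK).1 x.2.1
  refine subset_inter (fun y hy => ?_) (hC.segment_subset (hsK (hrK' x.2)).2 x.2.2)
  exact (mem_realizationSet_iff hK).2 ⟨t, ht, (convex_closedSimplex t).segment_subset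
    (hsr t ht x ⟨hxt, x.2.2⟩) hxt hy⟩

theorem convex_setOf_lt_apply (v : V) (a : ℝ) : Convex ℝ {x : V → ℝ | a < x v} :=
  convex_halfSpace_gt (LinearMap.proj (R := ℝ) (φ := fun _ : V => ℝ) v).isLinear a

theorem convex_setOf_apply_lt (v : V) (a : ℝ) : Convex ℝ {x : V → ℝ | x v < a} :=
  convex_halfSpace_lt (LinearMap.proj (R := ℝ) (φ := fun _ : V => ℝ) v).isLinear a

/-- The subcomplex of the faces avoiding the vertex `v`. -/
def deletion (K : Set (Finset V)) (v : V) : Set (Finset V) :=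
  {s ∈ K | v ∉ s}

theorem isLowerSet_deletion {K : Set (Finset V)} {v : V} (hK : IsLowerSet K) :
    IsLowerSet (deletion K v) :=
  fun _ _ hts hs => ⟨hK hts hs.1, fun hv => hs.2 (hts hv)⟩

/-- The link of the vertex `v`. -/
def link [DecidableEq V] (K : Set (Finset V)) (v : V) : Set (Finset V) :=
  {s | v ∉ s ∧ insert v s ∈ K}

variable {K : Set (Finset V)} {v : V} {n : ℤ}

section DecidableEq

variable [DecidableEq V]

/-- The radial projection from the vertex `v` onto the opposite face; it is meaningful for
`x v < 1`. -/
noncomputable def eraseVertex (v : V) (x : V → ℝ) : V → ℝ :=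
  (1 - x v)⁻¹ • (x - Pi.single v (x v))

theorem continuousOn_eraseVertex : ContinuousOn (eraseVertex v) {x | x v < 1} := by
  have hscalar : ContinuousOn (fun x : V → ℝ => (1 - x v)⁻¹) {x | x v < 1} :=
    .inv₀ (by fun_prop) fun x hx => (sub_pos.2 hx).ne'
  have hsingle : Continuous fun x : V → ℝ => (Pi.single v (x v) : V → ℝ) :=
    (continuous_single v).comp (continuous_apply v)
  exact hscalar.smul (continuous_id.sub hsingle).continuousOn

theorem eraseVertex_mem_closedSimplex {s : Finset V} {x : V → ℝ} (hx : x ∈ closedSimplex s)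
    (hxv : x v < 1) : eraseVertex v x ∈ closedSimplex (s.erase v) := by
  obtain ⟨h0, hxs, h1⟩ := hx
  have hpos : 0 < 1 - x v := sub_pos.2 hxv
  have hself : eraseVertex v x v = 0 := by simp [eraseVertex]
  have hne {w : V} (hw : w ≠ v) : eraseVertex v x w = (1 - x v)⁻¹ * x w := by
    simp [eraseVertex, hw]
  refine ⟨fun w => ?_, fun w hw => ?_, ?_⟩
  · rcases eq_or_ne w v with rfl | hwv
    · exact hself.ge
    · exact hne hwv ▸ mul_nonneg (inv_nonneg.2 hpos.le) (h0 w)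
  · rcases eq_or_ne w v with rfl | hwv
    · exact hself
    · rw [hne hwv, hxs w fun h => hw (Finset.mem_erase.2 ⟨hwv, h⟩), mul_zero]
  · have hsum : ∑ w ∈ s.erase v, x w = 1 - x v := by
      by_cases hv : v ∈ s
      · rw [Finset.sum_erase_eq_sub hv, h1]
      · rw [Finset.erase_eq_of_notMem hv, h1, hxs v hv, sub_zero]
    rw [Finset.sum_congr rfl fun w hw => hne (Finset.ne_of_mem_erase hw), ← Finset.mul_sum, hsum,
      inv_mul_cancel₀ hpos.ne']

theorem midpoint_single_mem_closedSimplex {s : Finset V} {x : V → ℝ} (hv : v ∈ s)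
    (hx : x ∈ closedSimplex s) : midpoint ℝ x (Pi.single v 1) ∈ closedSimplex s :=
  (convex_closedSimplex s).midpoint_mem hx (single_mem_closedSimplex hv)

theorem isLowerSet_link (hK : IsLowerSet K) : IsLowerSet (link K v) :=
  fun _ _ hts hs => ⟨fun hv => hs.1 (hts hv), hK (Finset.insert_subset_insert v hts) hs.2⟩

theorem single_mem_realizationSet (hK : IsLowerSet K) (hv : {v} ∈ K) :
    Pi.single v 1 ∈ realizationSet K :=
  (mem_realizationSet_iff hK).2 ⟨{v}, hv, single_mem_closedSimplex (Finset.mem_singleton_self v)⟩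

theorem contractibleSpace_realizationSet_inter (hK : IsLowerSet K) (hv : {v} ∈ K)
    {C : Set (V → ℝ)} (hC : Convex ℝ C) (hvC : Pi.single v 1 ∈ C)
    (h : ∀ s ∈ K, (closedSimplex s ∩ C).Nonempty → insert v s ∈ K) :
    ContractibleSpace ↥(realizationSet K ∩ C) := by
  refine StarConvex.contractibleSpace (x := Pi.single v 1) ?_
    ⟨_, single_mem_realizationSet hK hv, hvC⟩
  rw [starConvex_iff_segment_subset]
  rintro x ⟨hx, hxC⟩
  obtain ⟨s, hs, hxs⟩ := (mem_realizationSet_iff hK).1 hx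
  refine subset_inter (fun y hy => ?_) (hC.segment_subset hvC hxC)
  exact (mem_realizationSet_iff hK).2 ⟨insert v s, h s hs ⟨x, hxs, hxC⟩,
    (convex_closedSimplex _).segment_subset (single_mem_closedSimplex (Finset.mem_insert_self v s))
      (closedSimplex_mono (Finset.subset_insert v s) hxs) hy⟩

theorem IsNConnected.realization_of_cone (hK : IsLowerSet K) (hv : {v} ∈ K)
    (h : ∀ s ∈ K, insert v s ∈ K) : IsNConnected n (realization K) := by
  have := contractibleSpace_realizationSet_inter hK hv convex_univ (mem_univ _) fun s hs _ => h s hs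
  rw [inter_univ] at this
  exact .of_contractibleSpace (X := realizationSet K)

end DecidableEq

theorem IsNConnected.realizationSet_inter_apply_lt_one (hK : IsLowerSet K)
    (h : IsNConnected n (realization (deletion K v))) :
    IsNConnected n ↥(realizationSet K ∩ {x | x v < 1}) := by
  classical
  have hmem {s : Finset V} (hs : s ∈ K) : s.erase v ∈ deletion K v :=
    ⟨hK (Finset.erase_subset v s) hs, Finset.notMem_erase v s⟩
  refine h.realizationSet_inter hK (convex_setOf_apply_lt v 1)
    (continuousOn_eraseVertex.mono inter_subset_right) continuousOn_id (fun x hx => ?_)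
    (fun x hx => ?_) fun s _ x hx => ?_
  · obtain ⟨s, hs, hxs⟩ := (mem_realizationSet_iff hK).1 hx.1
    exact (mem_realizationSet_iff (isLowerSet_deletion hK)).2
      ⟨_, hmem hs, eraseVertex_mem_closedSimplex hxs hx.2⟩
  · obtain ⟨s, hs, hxs⟩ := (mem_realizationSet_iff (isLowerSet_deletion hK)).1 hx
    exact ⟨(mem_realizationSet_iff hK).2 ⟨s, hs.1, hxs⟩, (hxs.2.1 v hs.2).trans_lt one_pos⟩
  · exact closedSimplex_mono (Finset.erase_subset v s) (eraseVertex_mem_closedSimplex hx.1 hx.2)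

theorem IsNConnected.realizationSet_inter_apply_pos_lt_one [DecidableEq V] (hK : IsLowerSet K)
    (h : IsNConnected n (realization (link K v))) :
    IsNConnected n ↥(realizationSet K ∩ ({x | 0 < x v} ∩ {x | x v < 1})) := by
  refine h.realizationSet_inter hK ((convex_setOf_lt_apply v 0).inter (convex_setOf_apply_lt v 1))
    (s := fun x => midpoint ℝ x (Pi.single v 1))
    (continuousOn_eraseVertex.mono fun x hx => hx.2.2)
    (by simp only [midpoint_eq_smul_add]; fun_prop) (fun x hx => ?_)
    (fun x hx => ?_) fun s _ x hx => ?_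
  · obtain ⟨s, hs, hxs⟩ := (mem_realizationSet_iff hK).1 hx.1
    have hvs : v ∈ s := mem_of_mem_closedSimplex hxs hx.2.1
    exact (mem_realizationSet_iff (isLowerSet_link hK)).2 ⟨s.erase v,
      ⟨Finset.notMem_erase v s, by rwa [Finset.insert_erase hvs]⟩,
      eraseVertex_mem_closedSimplex hxs hx.2.2⟩
  · obtain ⟨s, ⟨hvs, hs⟩, hxs⟩ := (mem_realizationSet_iff (isLowerSet_link hK)).1 hx
    refine ⟨(mem_realizationSet_iff hK).2 ⟨_, hs, midpoint_single_mem_closedSimplex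
      (Finset.mem_insert_self v s) (closedSimplex_mono (Finset.subset_insert v s) hxs)⟩, ?_⟩
    have hmid : midpoint ℝ x (Pi.single v 1) v = 2⁻¹ := by
      simp [midpoint_eq_smul_add, hxs.2.1 v hvs]
    simp only [mem_inter_iff, mem_ofPred_eq, hmid]
    norm_num
  · exact midpoint_single_mem_closedSimplex (mem_of_mem_closedSimplex hx.1 hx.2.1)
      (closedSimplex_mono (Finset.erase_subset v s) (eraseVertex_mem_closedSimplex hx.1 hx.2.2))

theorem IsNConnected.of_deletion_of_link [DecidableEq V] (hK : IsLowerSet K) (hv : {v} ∈ K)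
    (hdel : IsNConnected n (realization (deletion K v)))
    (hlink : IsNConnected (n - 1) (realization (link K v))) : IsNConnected n (realization K) := by
  have hcover : realizationSet K ⊆ {x | 0 < x v} ∪ {x | x v < 1} := fun x _ =>
    (lt_or_ge 0 (x v)).imp_right fun h => h.trans_lt one_pos
  have hvpos : Pi.single v 1 ∈ {x : V → ℝ | 0 < x v} := by simp
  have hstar : ContractibleSpace ↥(realizationSet K ∩ {x | 0 < x v}) :=
    contractibleSpace_realizationSet_inter hK hv (convex_setOf_lt_apply v 0) hvpos
      fun s hs ⟨x, hxs, hx⟩ => by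
        rwa [Finset.insert_eq_of_mem (mem_of_mem_closedSimplex hxs hx)]
  exact .of_isOpen_cover (X := realizationSet K) (isOpen_lt continuous_const (continuous_apply v))
    (isOpen_lt (continuous_apply v) continuous_const) hcover .of_contractibleSpace
    (hdel.realizationSet_inter_apply_lt_one hK) (hlink.realizationSet_inter_apply_pos_lt_one hK)

end SimplicialComplex

section IndependenceComplex

variable {V : Type*} {G : SimpleGraph V}

/-- The independence complex of the subgraph of `G` induced on `W`, as a complex on the vertices
of `G`. -/
def indepFacesOn (G : SimpleGraph V) (W : Set V) : Set (Finset V) :=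
  {s ∈ indepFaces G | ↑s ⊆ W}

theorem indepFacesOn_univ : indepFacesOn G univ = indepFaces G := by
  simp [indepFacesOn]

theorem isLowerSet_indepFacesOn {W : Set V} : IsLowerSet (indepFacesOn G W) :=
  fun _ _ hts hs => ⟨fun _ ha _ hb => hs.1 _ (hts ha) _ (hts hb), fun _ hv => hs.2 (hts hv)⟩

theorem singleton_mem_indepFacesOn {W : Set V} {v : V} (hv : v ∈ W) : {v} ∈ indepFacesOn G W := by
  simpa [indepFacesOn, indepFaces]

theorem deletion_indepFacesOn (W : Set V) (v : V) :
    deletion (indepFacesOn G W) v = indepFacesOn G (W \ {v}) := by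
  ext s
  simp [deletion, indepFacesOn, subset_sdiff, and_assoc]

theorem insert_mem_indepFaces_iff [DecidableEq V] {s : Finset V} {v : V} :
    insert v s ∈ indepFaces G ↔ s ∈ indepFaces G ∧ ∀ w ∈ s, ¬ G.Adj v w := by
  simp only [indepFaces, mem_ofPred_eq, Finset.forall_mem_insert, G.irrefl, not_false_eq_true,
    true_and, G.adj_comm _ v, forall_and]
  tauto

theorem link_indepFacesOn [DecidableEq V] {W : Set V} {v : V} (hv : v ∈ W) :
    link (indepFacesOn G W) v = indepFacesOn G (W \ G.closedNbhd v) := by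
  ext s
  have hdisj : Disjoint (s : Set V) (G.closedNbhd v) ↔ v ∉ s ∧ ∀ w ∈ s, ¬ G.Adj v w := by
    simp [SimpleGraph.closedNbhd, Set.disjoint_left, imp_and, forall_and]
  simp only [link, indepFacesOn, mem_ofPred_eq, insert_mem_indepFaces_iff, subset_sdiff, hdisj,
    Finset.coe_insert, insert_subset_iff, hv, true_and]
  tauto

variable {n : ℤ}

theorem IsNConnected.indepFacesOn_of_forall_not_adj {W : Set V} {a : V} (ha : a ∈ W)
    (h : ∀ w ∈ W, ¬ G.Adj a w) : IsNConnected n (realization (indepFacesOn G W)) := by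
  classical
  refine .realization_of_cone (v := a) isLowerSet_indepFacesOn (singleton_mem_indepFacesOn ha)
    fun s hs => ⟨insert_mem_indepFaces_iff.2 ⟨hs.1, fun w hw => h w (hs.2 hw)⟩, ?_⟩
  rw [Finset.coe_insert]
  exact insert_subset ha hs.2

theorem IsNConnected.indepFacesOn_of_forall_adj [LinearOrder V] {W : Set V} {a : V} (ha : a ∈ W)
    (hfin : {v ∈ W | G.Adj a v}.Finite)
    (h : ∀ v ∈ W, G.Adj a v → IsNConnected (n - 1)
      (realization (indepFacesOn G ({w ∈ W | G.Adj a w → w ≤ v} \ G.closedNbhd v)))) :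
    IsNConnected n (realization (indepFacesOn G W)) := by
  obtain ⟨S, hS⟩ := hfin.exists_finset_coe
  clear hfin
  induction S using Finset.induction_on_max generalizing W with
  | empty =>
    exact .indepFacesOn_of_forall_not_adj ha fun w hw haw =>
      Finset.notMem_empty w (hS.symm.subset ⟨hw, haw⟩)
  | insert v S hmax ih =>
    obtain ⟨hvW, hav⟩ : v ∈ W ∧ G.Adj a v := hS.subset (Finset.mem_insert_self v S)
    refine .of_deletion_of_link (v := v) isLowerSet_indepFacesOn (singleton_mem_indepFacesOn hvW)
      ?_ ?_
    · rw [deletion_indepFacesOn]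
      have hS' : (S : Set V) = {w ∈ W \ {v} | G.Adj a w} := by
        have hvS : v ∉ S := fun hv => (hmax v hv).false
        rw [← Finset.erase_insert hvS, Finset.coe_erase, hS]
        ext w
        exact and_right_comm
      refine ih ⟨ha, hav.ne⟩ (fun u hu hau => ?_) hS'
      have huv : u < v := hmax u (hS'.symm.subset ⟨hu, hau⟩)
      have hW : {w ∈ W \ {v} | G.Adj a w → w ≤ u} = {w ∈ W | G.Adj a w → w ≤ u} := by
        ext w
        refine and_congr_left fun hwu => and_iff_left ?_
        rintro rfl
        exact (hwu hav).not_gt huv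
      exact hW ▸ h u hu.1 hau
    · rw [link_indepFacesOn hvW]
      have hW : {w ∈ W | G.Adj a w → w ≤ v} = W := sep_eq_self_iff_mem_true.2 fun w hw haw =>
        (Finset.mem_insert.1 (hS.symm.subset ⟨hw, haw⟩)).elim le_of_eq fun h => (hmax w h).le
      exact hW ▸ h v hvW hav

end IndependenceComplex

section LineGraph

theorem lineGraphL_adj_iff {n k : ℕ} {i j : Fin n} :
    (lineGraphL n k).Adj i j ↔ i ≠ j ∧ (i : ℕ) < j + k ∧ (j : ℕ) < i + k := by
  rw [lineGraphL, SimpleGraph.fromRel_adj]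
  refine and_congr_right fun hij => ?_
  have := Fin.val_ne_of_ne hij
  omega

theorem lineGraphL_sdiff_closedNbhd {n k : ℕ} {a v : Fin n} (hav : a ≤ v)
    (hadj : (lineGraphL n k).Adj a v) :
    {w ∈ {j : Fin n | (a : ℕ) ≤ j} | (lineGraphL n k).Adj a w → w ≤ v} \
        (lineGraphL n k).closedNbhd v =
      {w : Fin n | (v : ℕ) + k ≤ w} := by
  ext w
  simp only [SimpleGraph.closedNbhd, lineGraphL_adj_iff, mem_sdiff, mem_ofPred_eq, mem_insert_iff,
    SimpleGraph.mem_neighborSet, Fin.ext_iff, Fin.le_def, ne_eq] at *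
  omega

theorem isNConnected_indepFacesOn_lineGraphL {n k : ℕ} (D : ℕ) {a : ℕ}
    (h : a + D * (2 * k - 1) < n) : IsNConnected ((D : ℤ) - 1)
      (realization (indepFacesOn (lineGraphL n k) {j : Fin n | a ≤ (j : ℕ)})) := by
  induction D generalizing a with
  | zero =>
    have ha : {(⟨a, by omega⟩ : Fin n)} ∈ indepFacesOn (lineGraphL n k) {j : Fin n | a ≤ (j : ℕ)} :=
      singleton_mem_indepFacesOn (le_refl a)
    exact ⟨fun _ => ⟨⟨_, single_mem_realizationSet isLowerSet_indepFacesOn ha⟩⟩,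
      fun i hi => by omega⟩
  | succ D ih =>
    rw [Nat.succ_mul] at h
    let a' : Fin n := ⟨a, by omega⟩
    refine .indepFacesOn_of_forall_adj (a := a') (le_refl a) (toFinite _) fun v hav hadj => ?_
    have hv : (v : ℕ) < a + k := (lineGraphL_adj_iff.1 hadj).2.2
    rw [Nat.cast_succ, add_sub_right_comm, add_sub_cancel_right,
      lineGraphL_sdiff_closedNbhd (a := a') hav hadj]
    exact ih (by omega)

end LineGraph

end

/-- For `n ≥ 1`, `k ≥ 2`, the complex `Ind(L^k_n)` is
`⌊(n-1)/(2k-1) - 1⌋`-connected. -/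
theorem indComplex_lineGraph_connectivity {n k : ℕ} (hn : 1 ≤ n) (hk : 2 ≤ k) :
    IsNConnected ⌊((n : ℚ) - 1) / (2 * k - 1) - 1⌋
      (realization (indepFaces (lineGraphL n k))) := by
  have hfloor : ⌊((n : ℚ) - 1) / (2 * k - 1) - 1⌋ = ((n - 1) / (2 * k - 1) : ℕ) - 1 := by
    have h := Rat.floor_natCast_div_natCast (n - 1) (2 * k - 1)
    rw [Nat.cast_sub hn, Nat.cast_sub (show 1 ≤ 2 * k by omega)] at h
    rw [Int.floor_sub_one]
    push_cast at h ⊢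
    exact congrArg (· - 1) h
  have hdiv : 0 + (n - 1) / (2 * k - 1) * (2 * k - 1) < n := by
    have := Nat.div_mul_le_self (n - 1) (2 * k - 1)
    omega
  have huniv : {j : Fin n | 0 ≤ (j : ℕ)} = Set.univ := Set.eq_univ_of_forall fun j => j.val.zero_le
  rw [hfloor, ← indepFacesOn_univ, ← huniv]
  exact isNConnected_indepFacesOn_lineGraphL _ hdiv
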